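/- arXiv:2503.20675 — 6 statements merged into one kernel-verified Lean document; each statement's English description precedes it below -/
import Mathlib

section
/- Let V be a finite set; for each j ∈ V let n_j, m_j be positive integers, and let N⁺ assign to each j ∈ V a set N_j⁺ ⊆ V \ {j}; for each j ∈ V and k ∈ N_j⁺ let r_{jk} be a positive integer. Suppose given real matrices J_j ∈ ℝ^{m_j×m_j} antisymmetric, M_j ∈ ℝ^{m_j×n_j}, and for each j ∈ V, k ∈ N_j⁺, matrices D_{jk} ∈ ℝ^{r_{jk}×m_j} and N_{kj} ∈ ℝ^{r_{jk}×n_k}, such that D_{jk} J_j D_{jℓ}ᵀ = 0 for all distinct k, ℓ ∈ N_j⁺. Define the block matrix M = (M_{jk})_{j,k∈V} by M_{jj} = M_j, M_{jk} = D_{jk}ᵀ N_{kj} if k ∈ N_j⁺, and M_{jk} = 0 otherwise; let J := blockdiag_{j∈V}(J_j), let N_j⁻ := {k ∈ V : j ∈ N_k⁺}, and define the block matrix Γ = (γ_{jk})_{j,k∈V} by γ_{jj} = Σ_{ℓ ∈ {j} ∪ N_j⁻} M_{ℓj}ᵀ J_ℓ M_{ℓj}, γ_{jk} = 2 M_{kj}ᵀ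 J_k M_k if k ∈ N_j⁻ (j ≠ k), and γ_{jk} = 0 otherwise. Then the antisymmetric part of Γ equals MᵀJM, that is, (Γ − Γᵀ)/2 = MᵀJM. -/
open Matrix

/-!
The `(j, k)` block of `MᵀJM` is `∑ l, M_{lj}ᵀ J_l M_{lk}`, and transposing a summand swaps `j` and
`k` up to a sign, because `J_l` is antisymmetric. For `j ≠ k` the orthogonality
`D_{lj} J_l D_{lk}ᵀ = 0` leaves only the summands `l = j` and `l = k`; twice these are `-γ_{kj}ᵀ`
and `γ_{jk}`. For `j = k` every summand is antisymmetric, and so is their sum `γ_{jj}`.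
-/

section SigmaBlocks

variable {ι κ μ R : Type*} {l : ι → Type*} {m : κ → Type*} {n : μ → Type*}

/-- The `(i, j)` block of a block matrix, whose rows and columns are indexed by pairs consisting of
a block and a position within that block. -/
def sigmaBlock (A : Matrix (Σ i, l i) (Σ j, m j) R) (i : ι) (j : κ) : Matrix (l i) (m j) R :=
  A.submatrix (Sigma.mk i) (Sigma.mk j)

theorem ext_sigmaBlock {A B : Matrix (Σ i, l i) (Σ j, m j) R}
    (h : ∀ i j, sigmaBlock A i j = sigmaBlock B i j) : A = B := by
  ext ⟨i, a⟩ ⟨j, b⟩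
  exact congr_fun₂ (h i j) a b

theorem sigmaBlock_transpose (A : Matrix (Σ i, l i) (Σ j, m j) R) (i : ι) (j : κ) :
    sigmaBlock Aᵀ j i = (sigmaBlock A i j)ᵀ :=
  rfl

theorem sigmaBlock_mul [Fintype κ] [∀ j, Fintype (m j)] [NonUnitalNonAssocSemiring R]
    (A : Matrix (Σ i, l i) (Σ j, m j) R) (B : Matrix (Σ j, m j) (Σ k, n k) R) (i : ι) (k : μ) :
    sigmaBlock (A * B) i k = ∑ j, sigmaBlock A i j * sigmaBlock B j k := by
  ext a b
  simp only [sigmaBlock, submatrix_apply, mul_apply, Matrix.sum_apply, Fintype.sum_sigma]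

theorem sigmaBlock_blockDiagonal'_self [DecidableEq ι] [Zero R] {p : ι → Type*}
    (J : ∀ i, Matrix (l i) (p i) R) (i : ι) : sigmaBlock (blockDiagonal' J) i i = J i :=
  Matrix.ext (blockDiagonal'_apply_eq J i)

theorem sigmaBlock_blockDiagonal'_of_ne [DecidableEq ι] [Zero R] {p : ι → Type*}
    (J : ∀ i, Matrix (l i) (p i) R) {i j : ι} (hij : i ≠ j) :
    sigmaBlock (blockDiagonal' J) i j = 0 :=
  Matrix.ext fun a b => blockDiagonal'_apply_ne J a b hij

theorem eq_blockDiagonal'_of_sigmaBlock [DecidableEq ι] [Zero R] {p : ι → Type*}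
    {A : Matrix (Σ i, l i) (Σ i, p i) R} {J : ∀ i, Matrix (l i) (p i) R}
    (hdiag : ∀ i, sigmaBlock A i i = J i) (hoff : ∀ i j, i ≠ j → sigmaBlock A i j = 0) :
    A = blockDiagonal' J := by
  refine ext_sigmaBlock fun i j => ?_
  obtain rfl | hij := eq_or_ne i j
  · rw [hdiag, sigmaBlock_blockDiagonal'_self]
  · rw [hoff i j hij, sigmaBlock_blockDiagonal'_of_ne J hij]

theorem sigmaBlock_blockDiagonal'_mul [Fintype ι] [DecidableEq ι] {p : ι → Type*}
    [∀ i, Fintype (p i)] [NonUnitalNonAssocSemiring R] (J : ∀ i, Matrix (l i) (p i) R)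
    (A : Matrix (Σ i, p i) (Σ j, m j) R) (i : ι) (j : κ) :
    sigmaBlock (blockDiagonal' J * A) i j = J i * sigmaBlock A i j := by
  rw [sigmaBlock_mul, Fintype.sum_eq_single i, sigmaBlock_blockDiagonal'_self]
  intro k hk
  rw [sigmaBlock_blockDiagonal'_of_ne J hk.symm, Matrix.zero_mul]

end SigmaBlocks

section Congruence

variable {m n p q r R : Type*} [Fintype m] [CommRing R]

theorem transpose_transpose_mul_mul_of_antisymm {J : Matrix m m R} (hJ : Jᵀ = -J)
    (A : Matrix m n R) (B : Matrix m p R) : (Aᵀ * J * B)ᵀ = -(Bᵀ * J * A) := by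
  simp only [transpose_mul, transpose_transpose, hJ, Matrix.neg_mul, Matrix.mul_neg,
    Matrix.mul_assoc]

theorem transpose_mul_mul_eq_zero_of_factor [Fintype q] [Fintype r] {J : Matrix m m R}
    {D : Matrix q m R} {E : Matrix r m R} (h : D * J * Eᵀ = 0)
    (A : Matrix q n R) (B : Matrix r p R) : (Dᵀ * A)ᵀ * J * (Eᵀ * B) = 0 :=
  calc (Dᵀ * A)ᵀ * J * (Eᵀ * B) = Aᵀ * (D * J * Eᵀ) * B := by
        simp only [transpose_mul, transpose_transpose, Matrix.mul_assoc]
    _ = 0 := by rw [h, Matrix.mul_zero, Matrix.zero_mul]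

end Congruence

section Network

variable {V R : Type*} {m n : V → Type*} [∀ j, Fintype (m j)] [CommRing R]

/-- The contribution `M_{lj}ᵀ J_l M_{lk}` of the vertex `l` to the `(j, k)` block of `MᵀJM`, where
`J` is the block-diagonal matrix with blocks `J_l`. -/
def vertexTerm (J : ∀ j, Matrix (m j) (m j) R) (M : Matrix (Σ j, m j) (Σ k, n k) R) (l j k : V) :
    Matrix (n j) (n k) R :=
  (sigmaBlock M l j)ᵀ * J l * sigmaBlock M l k

variable {J : ∀ j, Matrix (m j) (m j) R} {M : Matrix (Σ j, m j) (Σ k, n k) R}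

theorem transpose_vertexTerm (hJ : ∀ j, (J j)ᵀ = -J j) (l j k : V) :
    (vertexTerm J M l j k)ᵀ = -vertexTerm J M l k j :=
  transpose_transpose_mul_mul_of_antisymm (hJ l) _ _

theorem vertexTerm_eq_zero_of_left {l j : V} (h : sigmaBlock M l j = 0) (k : V) :
    vertexTerm J M l j k = 0 := by
  rw [vertexTerm, h, transpose_zero, Matrix.zero_mul, Matrix.zero_mul]

theorem vertexTerm_eq_zero_of_right {l k : V} (h : sigmaBlock M l k = 0) (j : V) :
    vertexTerm J M l j k = 0 := by
  rw [vertexTerm, h, Matrix.mul_zero]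

theorem vertexTerm_eq_zero_of_orthogonal {Nplus : V → Finset V}
    {r : V → V → Type*} [∀ j k, Fintype (r j k)]
    {D : ∀ j k, Matrix (r j k) (m j) R} {N : ∀ j k, Matrix (r j k) (n k) R}
    (hD : ∀ j, ∀ k ∈ Nplus j, ∀ l ∈ Nplus j, k ≠ l → D j k * J j * (D j l)ᵀ = 0)
    (hM : ∀ j, ∀ k ∈ Nplus j, sigmaBlock M j k = (D j k)ᵀ * N j k)
    (hM₀ : ∀ j k, j ≠ k → k ∉ Nplus j → sigmaBlock M j k = 0)
    {l j k : V} (hlj : l ≠ j) (hlk : l ≠ k) (hjk : j ≠ k) : vertexTerm J M l j k = 0 := by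
  by_cases hj : j ∈ Nplus l
  · by_cases hk : k ∈ Nplus l
    · rw [vertexTerm, hM l j hj, hM l k hk]
      exact transpose_mul_mul_eq_zero_of_factor (hD l j hj k hk hjk) _ _
    · exact vertexTerm_eq_zero_of_right (hM₀ l k hlk hk) j
  · exact vertexTerm_eq_zero_of_left (hM₀ l j hlj hj) k

variable [Fintype V] [DecidableEq V]

theorem sigmaBlock_transpose_mul_blockDiagonal'_mul (J : ∀ j, Matrix (m j) (m j) R)
    (M : Matrix (Σ j, m j) (Σ k, n k) R) (j k : V) :
    sigmaBlock (Mᵀ * blockDiagonal' J * M) j k = ∑ l, vertexTerm J M l j k := by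
  simp only [Matrix.mul_assoc, sigmaBlock_mul Mᵀ, sigmaBlock_blockDiagonal'_mul,
    sigmaBlock_transpose, vertexTerm]

theorem sub_transpose_eq_two_smul_of_vertexTerm (hJ : ∀ j, (J j)ᵀ = -J j)
    (horth : ∀ l j k, l ≠ j → l ≠ k → j ≠ k → vertexTerm J M l j k = 0)
    {Γ : Matrix (Σ j, n j) (Σ k, n k) R}
    (hdiag : ∀ j, sigmaBlock Γ j j = ∑ l, vertexTerm J M l j j)
    (hoff : ∀ j k, j ≠ k → sigmaBlock Γ j k = (2 : R) • vertexTerm J M k j k) :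
    Γ - Γᵀ = (2 : R) • (Mᵀ * blockDiagonal' J * M) := by
  refine ext_sigmaBlock fun j k => ?_
  change sigmaBlock Γ j k - (sigmaBlock Γ k j)ᵀ =
    (2 : R) • sigmaBlock (Mᵀ * blockDiagonal' J * M) j k
  rw [sigmaBlock_transpose_mul_blockDiagonal'_mul]
  obtain rfl | hjk := eq_or_ne j k
  · simp only [hdiag, transpose_sum, transpose_vertexTerm hJ, Finset.sum_neg_distrib,
      sub_neg_eq_add, two_smul]
  · have hsum : ∑ l, vertexTerm J M l j k = vertexTerm J M j j k + vertexTerm J M k j k :=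
      Fintype.sum_eq_add j k hjk fun l hl => horth l j k hl.1 hl.2 hjk
    rw [hsum, hoff j k hjk, hoff k j hjk.symm, transpose_smul, transpose_vertexTerm hJ, smul_neg,
      sub_neg_eq_add, smul_add, add_comm]

theorem stmt_0_general {r : V → V → Type*} [∀ j k, Fintype (r j k)] (Nplus : V → Finset V)
    (hJ : ∀ j, (J j)ᵀ = -J j)
    (D : ∀ j k, Matrix (r j k) (m j) R) (N : ∀ j k, Matrix (r j k) (n k) R)
    (hD : ∀ j, ∀ k ∈ Nplus j, ∀ l ∈ Nplus j, k ≠ l → D j k * J j * (D j l)ᵀ = 0)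
    (hM : ∀ j, ∀ k ∈ Nplus j, sigmaBlock M j k = (D j k)ᵀ * N j k)
    (hM₀ : ∀ j k, j ≠ k → k ∉ Nplus j → sigmaBlock M j k = 0)
    {Γ : Matrix (Σ j, n j) (Σ k, n k) R}
    (hΓdiag : ∀ j, sigmaBlock Γ j j =
      ∑ l ∈ insert j (Finset.univ.filter fun k => j ∈ Nplus k),
        (sigmaBlock M l j)ᵀ * J l * sigmaBlock M l j)
    (hΓminus : ∀ j k, j ≠ k → j ∈ Nplus k →
      sigmaBlock Γ j k = (2 : R) • ((sigmaBlock M k j)ᵀ * J k * sigmaBlock M k k))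
    (hΓzero : ∀ j k, j ≠ k → j ∉ Nplus k → sigmaBlock Γ j k = 0) :
    Γ - Γᵀ = (2 : R) • (Mᵀ * blockDiagonal' J * M) := by
  refine sub_transpose_eq_two_smul_of_vertexTerm hJ
    (fun _ _ _ => vertexTerm_eq_zero_of_orthogonal hD hM hM₀) (fun j => ?_) fun j k hjk => ?_
  · rw [hΓdiag]
    refine Finset.sum_subset (Finset.subset_univ _) fun l _ hl => ?_
    simp only [Finset.mem_insert, Finset.mem_filter_univ, not_or] at hl
    exact vertexTerm_eq_zero_of_left (hM₀ l j hl.1 hl.2) j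
  · by_cases hj : j ∈ Nplus k
    · exact hΓminus j k hjk hj
    · rw [hΓzero j k hjk hj, vertexTerm_eq_zero_of_left (hM₀ k j hjk.symm hj), smul_zero]

end Network

/-- For a network of OQHOs on a finite vertex set `V` with field-mediated coupling
described by neighbourhoods `N⁺`, selection matrices `D`, coupling matrices `Mb`, `NN`
and antisymmetric Ito matrices `Jb`, the antisymmetric part of the block matrix `Γ`
(built from the blocks of the network-field coupling matrix `M`) equals `Mᵀ J M`:
`(Γ - Γᵀ)/2 = Mᵀ J M`. -/
theorem stmt_0 (V : Type) [Fintype V] [DecidableEq V]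
    (n m : V → ℕ) (hn : ∀ j, 0 < n j) (hm : ∀ j, 0 < m j)
    (Nplus : V → Finset V) (hNplus : ∀ j, j ∉ Nplus j)
    (r : V → V → ℕ) (hr : ∀ j k, k ∈ Nplus j → 0 < r j k)
    -- data of the component oscillators
    (Jb : ∀ j, Matrix (Fin (m j)) (Fin (m j)) ℝ)
    (hJb : ∀ j, (Jb j)ᵀ = -(Jb j))
    (Mb : ∀ j, Matrix (Fin (m j)) (Fin (n j)) ℝ)
    (D : ∀ j k, Matrix (Fin (r j k)) (Fin (m j)) ℝ)
    (NN : ∀ j k, Matrix (Fin (r j k)) (Fin (n k)) ℝ)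
    (hD : ∀ j, ∀ k ∈ Nplus j, ∀ l ∈ Nplus j, k ≠ l → D j k * Jb j * (D j l)ᵀ = 0)
    -- the block matrix `M = (M_{jk})` of network-field coupling
    (M : Matrix ((j : V) × Fin (m j)) ((j : V) × Fin (n j)) ℝ)
    (hMdiag : ∀ j (a : Fin (m j)) (b : Fin (n j)), M ⟨j, a⟩ ⟨j, b⟩ = Mb j a b)
    (hMplus : ∀ j k (h : k ∈ Nplus j), ∀ (a : Fin (m j)) (b : Fin (n k)),
      M ⟨j, a⟩ ⟨k, b⟩ = ((D j k)ᵀ * NN j k) a b)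
    (hMzero : ∀ j k, j ≠ k → k ∉ Nplus j → ∀ (a : Fin (m j)) (b : Fin (n k)),
      M ⟨j, a⟩ ⟨k, b⟩ = 0)
    -- the block-diagonal matrix `J`
    (J : Matrix ((j : V) × Fin (m j)) ((j : V) × Fin (m j)) ℝ)
    (hJdiag : ∀ j (a b : Fin (m j)), J ⟨j, a⟩ ⟨j, b⟩ = Jb j a b)
    (hJoff : ∀ j k, j ≠ k → ∀ (a : Fin (m j)) (b : Fin (m k)), J ⟨j, a⟩ ⟨k, b⟩ = 0)
    -- the blocks `M_{jk}` of `M` as rectangular matrices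
    (Mblk : ∀ j k, Matrix (Fin (m j)) (Fin (n k)) ℝ)
    (hMblk : ∀ j k (a : Fin (m j)) (b : Fin (n k)), Mblk j k a b = M ⟨j, a⟩ ⟨k, b⟩)
    -- the block matrix `Γ = (γ_{jk})`
    (Γ : Matrix ((j : V) × Fin (n j)) ((j : V) × Fin (n j)) ℝ)
    (hΓdiag : ∀ j (a b : Fin (n j)), Γ ⟨j, a⟩ ⟨j, b⟩ =
      (∑ l ∈ insert j (Finset.univ.filter fun k => j ∈ Nplus k),
        (Mblk l j)ᵀ * Jb l * Mblk l j) a b)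
    (hΓminus : ∀ j k, j ≠ k → j ∈ Nplus k → ∀ (a : Fin (n j)) (b : Fin (n k)),
      Γ ⟨j, a⟩ ⟨k, b⟩ = ((2 : ℝ) • ((Mblk k j)ᵀ * Jb k * Mb k)) a b)
    (hΓzero : ∀ j k, j ≠ k → j ∉ Nplus k → ∀ (a : Fin (n j)) (b : Fin (n k)),
      Γ ⟨j, a⟩ ⟨k, b⟩ = 0) :
    (1 / 2 : ℝ) • (Γ - Γᵀ) = Mᵀ * J * M := by
  obtain rfl : Mblk = sigmaBlock M := funext₂ fun j k => Matrix.ext (hMblk j k)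
  obtain rfl : (fun j => sigmaBlock M j j) = Mb := funext fun j => Matrix.ext (hMdiag j)
  obtain rfl : J = blockDiagonal' Jb := eq_blockDiagonal'_of_sigmaBlock
    (fun j => Matrix.ext (hJdiag j)) fun j k hjk => Matrix.ext (hJoff j k hjk)
  have hΓ : Γ - Γᵀ = (2 : ℝ) • (Mᵀ * blockDiagonal' Jb * M) :=
    stmt_0_general Nplus hJb D NN hD
      (fun j k hk => Matrix.ext (hMplus j k hk)) (fun j k hjk hk => Matrix.ext (hMzero j k hjk hk))
      (fun j => Matrix.ext (hΓdiag j)) (fun j k hjk hj => Matrix.ext (hΓminus j k hjk hj))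
      fun j k hjk hj => Matrix.ext (hΓzero j k hjk hj)
  rw [hΓ, one_div, inv_smul_smul₀ two_ne_zero]
end

section
/- Let Θ ∈ ℝ^{n×n} and J ∈ ℝ^{m×m} be antisymmetric, let R ∈ ℝ^{n×n} be symmetric, and let M ∈ ℝ^{m×n}. Define A := 2Θ(R + MᵀJM) and B := 2ΘMᵀ. Then the physical realizability identity AΘ + ΘAᵀ + BJBᵀ = 0 holds. -/
open Matrix

/-! Since `Θ` is antisymmetric, `A = 2ΘH` gives `AΘ + ΘAᵀ = 2Θ(H - Hᵀ)Θ`, which sees only the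
antisymmetric part of `H = R + MᵀJM`, namely `MᵀJM`. Hence `AΘ + ΘAᵀ = 4ΘMᵀJMΘ`, and this is
cancelled by `BJBᵀ` because `Bᵀ = 2MΘᵀ = -2MΘ`. -/

section

variable {n m α : Type*}

theorem add_sub_transpose_add_eq_add_self [AddCommGroup α] {R S : Matrix n n α}
    (hR : Rᵀ = R) (hS : Sᵀ = -S) : (R + S) - (R + S)ᵀ = S + S := by
  rw [transpose_add, hR, hS]
  abel

theorem transpose_transpose_mul_mul_eq_neg [NonUnitalCommRing α] [Fintype m]
    {J : Matrix m m α} (hJ : Jᵀ = -J) (M : Matrix m n α) :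
    (Mᵀ * J * M)ᵀ = -(Mᵀ * J * M) := by
  simp only [transpose_mul, transpose_transpose, hJ, Matrix.neg_mul, Matrix.mul_neg,
    Matrix.mul_assoc]

theorem mul_mul_add_mul_transpose_mul_of_antisymm [NonUnitalCommRing α] [Fintype n]
    {Θ : Matrix n n α} (hΘ : Θᵀ = -Θ) (H : Matrix n n α) :
    Θ * H * Θ + Θ * (Θ * H)ᵀ = Θ * (H - Hᵀ) * Θ := by
  rw [transpose_mul, hΘ, Matrix.mul_neg, Matrix.mul_neg, Matrix.mul_sub, Matrix.sub_mul,
    ← Matrix.mul_assoc, sub_eq_add_neg]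

theorem mul_mul_transpose_mul_of_antisymm [NonUnitalCommRing α] [Fintype n] [Fintype m]
    {Θ : Matrix n n α} (hΘ : Θᵀ = -Θ) (J : Matrix m m α) (M : Matrix m n α) :
    Θ * Mᵀ * J * (Θ * Mᵀ)ᵀ = -(Θ * (Mᵀ * J * M) * Θ) := by
  simp only [transpose_mul, transpose_transpose, hΘ, Matrix.mul_neg, Matrix.mul_assoc]

theorem stmt_2_general [CommRing α] [Fintype n] [Fintype m] {Θ : Matrix n n α}
    {J : Matrix m m α} {R : Matrix n n α} {M : Matrix m n α}
    (hΘ : Θᵀ = -Θ) (hJ : Jᵀ = -J) (hR : Rᵀ = R)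
    {A : Matrix n n α} (hA : A = (2 : α) • (Θ * (R + Mᵀ * J * M)))
    {B : Matrix n m α} (hB : B = (2 : α) • (Θ * Mᵀ)) :
    A * Θ + Θ * Aᵀ + B * J * Bᵀ = 0 := by
  set S := Mᵀ * J * M with hS
  have drift : A * Θ + Θ * Aᵀ = (4 : α) • (Θ * S * Θ) := calc
    A * Θ + Θ * Aᵀ = (2 : α) • (Θ * (R + S) * Θ + Θ * (Θ * (R + S))ᵀ) := by
      rw [hA, transpose_smul, Matrix.smul_mul, Matrix.mul_smul, smul_add]
    _ = (2 : α) • (Θ * (S + S) * Θ) := by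
      rw [mul_mul_add_mul_transpose_mul_of_antisymm hΘ,
        add_sub_transpose_add_eq_add_self hR (transpose_transpose_mul_mul_eq_neg hJ M)]
    _ = (4 : α) • (Θ * S * Θ) := by
      rw [Matrix.mul_add, Matrix.add_mul]
      module
  have noise : B * J * Bᵀ = -((4 : α) • (Θ * S * Θ)) := calc
    B * J * Bᵀ = (2 : α) • (2 : α) • (Θ * Mᵀ * J * (Θ * Mᵀ)ᵀ) := by
      rw [hB, transpose_smul, Matrix.smul_mul, Matrix.smul_mul, Matrix.mul_smul]
    _ = -((4 : α) • (Θ * S * Θ)) := by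
      rw [mul_mul_transpose_mul_of_antisymm hΘ, ← hS]
      module
  rw [drift, noise, add_neg_cancel]

end

/-- Physical realizability identity `AΘ + ΘAᵀ + BJBᵀ = 0` for
`A = 2Θ(R + MᵀJM)`, `B = 2ΘMᵀ`, with `Θ`, `J` antisymmetric and `R` symmetric. -/
theorem stmt_2 (n m : ℕ) (Θ : Matrix (Fin n) (Fin n) ℝ)
    (J : Matrix (Fin m) (Fin m) ℝ) (R : Matrix (Fin n) (Fin n) ℝ)
    (M : Matrix (Fin m) (Fin n) ℝ)
    (hΘ : Θᵀ = -Θ) (hJ : Jᵀ = -J) (hR : Rᵀ = R)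
    (A : Matrix (Fin n) (Fin n) ℝ) (hA : A = (2 : ℝ) • (Θ * (R + Mᵀ * J * M)))
    (B : Matrix (Fin n) (Fin m) ℝ) (hB : B = (2 : ℝ) • (Θ * Mᵀ)) :
    A * Θ + Θ * Aᵀ + B * J * Bᵀ = 0 :=
  stmt_2_general hΘ hJ hR hA hB
end

section
/- Let Θ ∈ ℝ^{n×n} and J ∈ ℝ^{m×m} be real antisymmetric, M ∈ ℝ^{m×n}, B := 2ΘMᵀ, let P, Σ ∈ ℝ^{n×n} be symmetric, and for a symmetric matrix R ∈ ℝ^{n×n} set A(R) := 2Θ(R + MᵀJM) and f(R) := ⟨Σ, A(R)BBᵀ + BBᵀA(R)ᵀ + 2A(R)PA(R)ᵀ⟩. Then for all symmetric R, δ ∈ ℝ^{n×n}, the directional derivative of f at R along δ is d/dt f(R + tδ)|_{t=0} = ⟨−4S(ΘΣ(BBᵀ + 2A(R)P)), δ⟩, where S(X) := (X + Xᵀ)/2. -/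
open Matrix

/-! The matrix paired with `Σ` is quadratic in the drift `X = A(R)`, and its increment along `Y` has
linear part `W + Wᵀ` with `W = (BBᵀ + 2XP)Yᵀ`. Pairing with the symmetric `Σ` identifies `W` with
`Wᵀ`, so the gradient in `X` is `2Σ(BBᵀ + 2XP)`. Since `A` is affine with linear part `2Θ`, the
chain rule multiplies this on the left by `(2Θ)ᵀ = -2Θ`; symmetric directions see only the symmetric
part of the result. -/

section CommSemiring

variable {α ι : Type*} [CommSemiring α] [Fintype ι]

/-- The matrix `XK + KXᵀ + 2XPXᵀ`, whose Frobenius product with `Σ` is `Δ''(0)` for a network with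
drift matrix `X`, diffusion matrix `K = BBᵀ` and second-moment matrix `P`. -/
def deviationMatrix (K P X : Matrix ι ι α) : Matrix ι ι α :=
  X * K + K * Xᵀ + (2 : α) • (X * P * Xᵀ)

theorem deviationMatrix_add {K P : Matrix ι ι α} (hK : K.IsSymm) (hP : P.IsSymm)
    (X Y : Matrix ι ι α) :
    deviationMatrix K P (X + Y) =
      deviationMatrix K P X +
        ((K + (2 : α) • (X * P)) * Yᵀ + ((K + (2 : α) • (X * P)) * Yᵀ)ᵀ) +
        (2 : α) • (Y * P * Yᵀ) := by
  simp only [deviationMatrix, transpose_add, transpose_mul, transpose_smul, transpose_transpose,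
    hK.eq, hP.eq, Matrix.add_mul, Matrix.mul_add, Matrix.smul_mul, smul_add,
    Matrix.mul_assoc]
  abel

theorem trace_mul_add_transpose {S : Matrix ι ι α} (hS : S.IsSymm) (Z : Matrix ι ι α) :
    (S * (Z + Zᵀ)).trace = 2 * (S * Z).trace := by
  have trace_mul_transpose : (S * Zᵀ).trace = (S * Z).trace := by
    rw [← trace_transpose_mul S Z, hS.eq]
  rw [Matrix.mul_add, trace_add, trace_mul_transpose, two_mul]

theorem trace_mul_deviationMatrix_add {S K P : Matrix ι ι α} (hS : S.IsSymm) (hK : K.IsSymm)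
    (hP : P.IsSymm) (X Y : Matrix ι ι α) :
    (S * deviationMatrix K P (X + Y)).trace =
      (S * deviationMatrix K P X).trace +
        2 * ((S * (K + (2 : α) • (X * P)))ᵀ * Y).trace +
        2 * (S * (Y * P * Yᵀ)).trace := by
  have trace_linear_part (G : Matrix ι ι α) : (S * (G * Yᵀ)).trace = ((S * G)ᵀ * Y).trace := by
    rw [← Matrix.mul_assoc, ← trace_transpose_mul, transpose_transpose]
  rw [deviationMatrix_add hK hP, Matrix.mul_add, Matrix.mul_add, trace_add, trace_add,
    trace_mul_add_transpose hS, trace_linear_part, Matrix.mul_smul, trace_smul, smul_eq_mul]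

end CommSemiring

theorem trace_transpose_half_smul_add_transpose_mul {𝕜 ι : Type*} [Field 𝕜] [NeZero (2 : 𝕜)]
    [Fintype ι] (X : Matrix ι ι 𝕜) {δ : Matrix ι ι 𝕜} (hδ : δ.IsSymm) :
    (((1 / 2 : 𝕜) • (X + Xᵀ))ᵀ * δ).trace = (Xᵀ * δ).trace := by
  rw [transpose_smul, transpose_add, smul_mul, trace_smul, trace_mul_comm,
    trace_mul_add_transpose hδ, trace_mul_comm, smul_eq_mul, ← mul_assoc,
    one_div_mul_cancel two_ne_zero, one_mul]

section NontriviallyNormedField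

variable {𝕜 ι : Type*} [NontriviallyNormedField 𝕜] [Fintype ι]

theorem hasDerivAt_quadratic_zero (c b a : 𝕜) :
    HasDerivAt (fun t : 𝕜 => c + t * b + t ^ 2 * a) b 0 := by
  simpa using (((hasDerivAt_id (0 : 𝕜)).mul_const b).const_add c).fun_add
    ((hasDerivAt_pow 2 (0 : 𝕜)).mul_const a)

theorem hasDerivAt_trace_mul_deviationMatrix {S K P : Matrix ι ι 𝕜} (hS : S.IsSymm)
    (hK : K.IsSymm) (hP : P.IsSymm) (X D : Matrix ι ι 𝕜) :
    HasDerivAt (fun t : 𝕜 => (S * deviationMatrix K P (X + t • D)).trace)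
      (2 * ((S * (K + (2 : 𝕜) • (X * P)))ᵀ * D).trace) 0 := by
  convert hasDerivAt_quadratic_zero (S * deviationMatrix K P X).trace
    (2 * ((S * (K + (2 : 𝕜) • (X * P)))ᵀ * D).trace) (2 * (S * (D * P * Dᵀ)).trace) using 2 with t
  rw [trace_mul_deviationMatrix_add hS hK hP]
  simp only [transpose_smul, Matrix.smul_mul, Matrix.mul_smul, trace_smul, smul_eq_mul]
  ring

theorem stmt_14_general {κ : Type*} [Fintype κ]
    (Θ : Matrix ι ι 𝕜) (hΘ : Θᵀ = -Θ) (J : Matrix κ κ 𝕜) (M : Matrix κ ι 𝕜) (B : Matrix ι κ 𝕜)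
    (P Sig : Matrix ι ι 𝕜) (hP : P.IsSymm) (hSig : Sig.IsSymm)
    (A : Matrix ι ι 𝕜 → Matrix ι ι 𝕜)
    (hA : ∀ R, A R = (2 : 𝕜) • (Θ * (R + Mᵀ * J * M)))
    (f : Matrix ι ι 𝕜 → 𝕜)
    (hf : ∀ R, f R = (Sigᵀ *
      (A R * B * Bᵀ + B * Bᵀ * (A R)ᵀ + (2 : 𝕜) • (A R * P * (A R)ᵀ))).trace)
    (R δ : Matrix ι ι 𝕜) :
    HasDerivAt (fun t : 𝕜 => f (R + t • δ))
      (-4 * ((Θ * Sig * (B * Bᵀ + (2 : 𝕜) • (A R * P)))ᵀ * δ).trace) 0 := by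
  have drift_line (t : 𝕜) : A (R + t • δ) = A R + t • (2 : 𝕜) • (Θ * δ) := by
    rw [hA, hA, add_right_comm, Matrix.mul_add, smul_add, Matrix.mul_smul, smul_comm]
  have f_line (t : 𝕜) : f (R + t • δ) =
      (Sig * deviationMatrix (B * Bᵀ) P (A R + t • (2 : 𝕜) • (Θ * δ))).trace := by
    rw [hf, hSig.eq, drift_line, deviationMatrix, Matrix.mul_assoc _ B]
  have trace_adjoint (G : Matrix ι ι 𝕜) :
      2 * ((Sig * G)ᵀ * ((2 : 𝕜) • (Θ * δ))).trace = -4 * ((Θ * Sig * G)ᵀ * δ).trace := by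
    rw [Matrix.mul_assoc Θ, transpose_mul Θ, hΘ, Matrix.mul_smul, trace_smul, Matrix.mul_neg,
      Matrix.neg_mul, trace_neg, Matrix.mul_assoc, smul_eq_mul]
    ring
  have hBB : (B * Bᵀ).IsSymm := by rw [IsSymm, transpose_mul, transpose_transpose]
  rw [funext f_line, ← trace_adjoint]
  exact hasDerivAt_trace_mul_deviationMatrix hSig hBB hP _ _

end NontriviallyNormedField

/-- Directional derivative of `f(R) = ⟨Σ, A(R)BBᵀ + BBᵀA(R)ᵀ + 2A(R)PA(R)ᵀ⟩` at a
symmetric `R` along a symmetric `δ`: it equals `⟨−4S(ΘΣ(BBᵀ + 2A(R)P)), δ⟩`. -/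
theorem stmt_14 (n m : ℕ)
    (Θ : Matrix (Fin n) (Fin n) ℝ) (hΘ : Θᵀ = -Θ)
    (J : Matrix (Fin m) (Fin m) ℝ) (hJ : Jᵀ = -J)
    (M : Matrix (Fin m) (Fin n) ℝ)
    (B : Matrix (Fin n) (Fin m) ℝ) (hB : B = (2 : ℝ) • (Θ * Mᵀ))
    (P Sig : Matrix (Fin n) (Fin n) ℝ) (hP : Pᵀ = P) (hSig : Sigᵀ = Sig)
    (A : Matrix (Fin n) (Fin n) ℝ → Matrix (Fin n) (Fin n) ℝ)
    (hA : ∀ R, A R = (2 : ℝ) • (Θ * (R + Mᵀ * J * M)))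
    (f : Matrix (Fin n) (Fin n) ℝ → ℝ)
    (hf : ∀ R, f R = (Sigᵀ *
      (A R * B * Bᵀ + B * Bᵀ * (A R)ᵀ + (2 : ℝ) • (A R * P * (A R)ᵀ))).trace) :
    ∀ R δ : Matrix (Fin n) (Fin n) ℝ, Rᵀ = R → δᵀ = δ →
      HasDerivAt (fun t : ℝ => f (R + t • δ))
        ((((-4 : ℝ) • ((1 / 2 : ℝ) •
          (Θ * Sig * (B * Bᵀ + (2 : ℝ) • (A R * P)) +
            (Θ * Sig * (B * Bᵀ + (2 : ℝ) • (A R * P)))ᵀ)))ᵀ * δ).trace) 0 := by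
  intro R δ _ hδ
  rw [transpose_smul, smul_mul, trace_smul, trace_transpose_half_smul_add_transpose_mul _ hδ]
  exact stmt_14_general Θ hΘ J M B P Sig hP hSig A hA f hf R δ
end

section
/- Let Θ ∈ ℝ^{n×n} and J ∈ ℝ^{m×m} be real antisymmetric, M ∈ ℝ^{m×n}, B := 2ΘMᵀ, let P ∈ ℝ^{n×n} be real symmetric positive semidefinite with positive semidefinite square root √P, let F ∈ ℝ^{s×n}, Σ := FᵀF, and for symmetric R ∈ ℝ^{n×n} set A(R) := 2Θ(R + MᵀJM) and f(R) := ⟨Σ, A(R)BBᵀ + BBᵀA(R)ᵀ + 2A(R)PA(R)ᵀ⟩. Then for all symmetric R, δ ∈ ℝ^{n×n}, the second directional derivative satisfies d²/dt² f(R + tδ)|_{t=0} = 16‖FΘδ√P‖² ≥ 0; in particular, f is a convex function on the space of real symmetric n×n matrices. -/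
open Matrix

/-! With `X = R + K`, where `K = MᵀJM`, and `P = SSᵀ`, the function `f` is the sum of the quadratic
form `8 ‖FΘXS‖²` and a linear form in `X`. The second derivative along `δ` sees only the quadratic
form and is twice its value at `δ`; the nonnegativity of that form makes `f` convex. -/

section QuadraticForm

variable {R E : Type*} [CommRing R] [AddCommGroup E] [Module R E]

theorem quadraticForm_map_add_smul (Q : QuadraticForm R E) (x v : E) (t : R) :
    Q (x + t • v) = Q x + QuadraticMap.polar Q x v * t + Q v * t ^ 2 := by
  rw [QuadraticMap.map_add Q, QuadraticMap.map_smul, QuadraticMap.polar_smul_right,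
    smul_eq_mul, smul_eq_mul]
  ring

theorem quadraticForm_map_convex_combination (Q : QuadraticForm R E) (x y : E) {a b : R}
    (hab : a + b = 1) :
    Q (a • x + b • y) = a * Q x + b * Q y - a * b * Q (x - y) := by
  have sub_eq : Q (x - y) = Q x - QuadraticMap.polar Q x y + Q y := by
    simpa [← sub_eq_add_neg] using quadraticForm_map_add_smul Q x y (-1)
  obtain rfl : a = 1 - b := eq_sub_of_add_eq hab
  rw [QuadraticMap.map_add Q, QuadraticMap.map_smul, QuadraticMap.map_smul,
    QuadraticMap.polar_smul_left, QuadraticMap.polar_smul_right, sub_eq]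
  simp only [smul_eq_mul]
  ring

theorem convexOn_quadraticForm [PartialOrder R] [IsOrderedRing R] {Q : QuadraticForm R E}
    (hQ : ∀ x, 0 ≤ Q x) : ConvexOn R Set.univ Q := by
  refine ⟨convex_univ, fun x _ y _ a b ha hb hab => ?_⟩
  rw [quadraticForm_map_convex_combination Q x y hab, smul_eq_mul, smul_eq_mul, sub_le_self_iff]
  exact mul_nonneg (mul_nonneg ha hb) (hQ (x - y))

theorem hasDerivAt_deriv_quadratic (a b c t : ℝ) :
    HasDerivAt (deriv fun τ : ℝ => a + b * τ + c * τ ^ 2) (2 * c) t := by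
  have deriv_eq : (deriv fun τ : ℝ => a + b * τ + c * τ ^ 2) = fun τ => b + 2 * c * τ := by
    funext τ
    refine HasDerivAt.deriv ?_
    convert! ((hasDerivAt_const_mul b).const_add a).add ((hasDerivAt_pow 2 τ).const_mul c) using 1
    simp only [Nat.cast_ofNat, Nat.add_one_sub_one, pow_one]
    ring
  rw [deriv_eq]
  exact (hasDerivAt_const_mul (2 * c)).const_add b

theorem hasDerivAt_deriv_quadraticForm_add_linear {E : Type*} [AddCommGroup E] [Module ℝ E]
    (Q : QuadraticForm ℝ E) (l : E →ₗ[ℝ] ℝ) (x v : E) (t : ℝ) :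
    HasDerivAt (deriv fun τ : ℝ => Q (x + τ • v) + l (x + τ • v)) (2 * Q v) t := by
  convert! hasDerivAt_deriv_quadratic (Q x + l x) (QuadraticMap.polar Q x v + l v) (Q v) t using 3
  rw [quadraticForm_map_add_smul, map_add, map_smul, smul_eq_mul]
  ring

end QuadraticForm

section Frobenius

variable {m n p s k : Type*} [Fintype m] [Fintype n] [Fintype p] [Fintype s] [Fintype k]

/-- The squared Frobenius norm `‖X‖² = tr(XᵀX)`, as a quadratic form on real matrices. -/
def frobeniusSq (m n : Type*) [Fintype m] [Fintype n] : QuadraticForm ℝ (Matrix m n ℝ) :=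
  LinearMap.BilinMap.toQuadraticMap <| LinearMap.mk₂ ℝ (fun X Y => (Xᵀ * Y).trace)
    (fun X X' Y => by rw [transpose_add, Matrix.add_mul, trace_add])
    (fun c X Y => by rw [transpose_smul, Matrix.smul_mul, trace_smul])
    (fun X Y Y' => by rw [Matrix.mul_add, trace_add])
    (fun c X Y => by rw [Matrix.mul_smul, trace_smul])

theorem frobeniusSq_apply (X : Matrix m n ℝ) : frobeniusSq m n X = (Xᵀ * X).trace :=
  rfl

theorem frobeniusSq_nonneg (X : Matrix m n ℝ) : 0 ≤ frobeniusSq m n X :=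
  (posSemidef_conjTranspose_mul_self X).trace_nonneg

theorem trace_transpose_mul_self_mul_mul_transpose (F : Matrix s p ℝ) (Y : Matrix p n ℝ)
    (S : Matrix n k ℝ) :
    (Fᵀ * F * (Y * (S * Sᵀ) * Yᵀ)).trace = frobeniusSq s k (F * Y * S) := by
  rw [frobeniusSq_apply, trace_mul_comm (F * Y * S)ᵀ, Matrix.mul_assoc Fᵀ F, trace_mul_comm Fᵀ]
  simp only [transpose_mul, Matrix.mul_assoc]

theorem trace_mul_mul_add_mul_transpose {R : Type*} [CommSemiring R] {G C : Matrix n n R}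
    (hG : G.IsSymm) (hC : C.IsSymm) (Y : Matrix n n R) :
    (G * (Y * C + C * Yᵀ)).trace = 2 * (C * G * Y).trace := by
  have transpose_part : (G * (C * Yᵀ)).trace = (C * G * Y).trace := by
    rw [← trace_transpose, transpose_mul, transpose_mul, transpose_transpose, hG.eq, hC.eq,
      trace_mul_cycle, trace_mul_comm, Matrix.mul_assoc]
  rw [Matrix.mul_add, trace_add, transpose_part, ← Matrix.mul_assoc, trace_mul_comm,
    ← Matrix.mul_assoc, two_mul]

/-- The quadratic part `X ↦ 8 ‖FΘXS‖²` of the cost `f`, where `P = SSᵀ`. -/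
def costQuadratic (F : Matrix s n ℝ) (Θ : Matrix n p ℝ) (S : Matrix n k ℝ) :
    QuadraticForm ℝ (Matrix p n ℝ) :=
  (8 : ℝ) • (frobeniusSq s k).comp
    (mulRightLinearMap s ℝ S ∘ₗ mulLeftLinearMap n ℝ (F * Θ))

theorem costQuadratic_apply (F : Matrix s n ℝ) (Θ : Matrix n p ℝ) (S : Matrix n k ℝ)
    (X : Matrix p n ℝ) :
    costQuadratic F Θ S X = 8 * frobeniusSq s k (F * Θ * X * S) :=
  rfl

theorem costQuadratic_nonneg (F : Matrix s n ℝ) (Θ : Matrix n p ℝ) (S : Matrix n k ℝ)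
    (X : Matrix p n ℝ) : 0 ≤ costQuadratic F Θ S X :=
  mul_nonneg (by norm_num) (frobeniusSq_nonneg _)

/-- The linear part `X ↦ ⟨G, AC + CAᵀ⟩` of the cost `f`, where `A = 2ΘX`, `G = Σ` and `C = BBᵀ`.
It is encoded as `4 tr(CGΘX)`, which agrees with this because `G` and `C` are symmetric there. -/
def costLinear (G C : Matrix n n ℝ) (Θ : Matrix n p ℝ) : Matrix p n ℝ →ₗ[ℝ] ℝ :=
  (4 : ℝ) • traceLinearMap n ℝ ℝ ∘ₗ mulLeftLinearMap n ℝ (C * G * Θ)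

theorem costLinear_apply (G C : Matrix n n ℝ) (Θ : Matrix n p ℝ) (X : Matrix p n ℝ) :
    costLinear G C Θ X = 4 * (C * G * Θ * X).trace :=
  rfl

theorem trace_cost_eq_quadratic_add_linear (F : Matrix s n ℝ) (Θ : Matrix n p ℝ)
    (S : Matrix n k ℝ) (B : Matrix n m ℝ) (X : Matrix p n ℝ) {Y : Matrix n n ℝ}
    (hY : Y = (2 : ℝ) • (Θ * X)) :
    ((Fᵀ * F)ᵀ * (Y * B * Bᵀ + B * Bᵀ * Yᵀ + (2 : ℝ) • (Y * (S * Sᵀ) * Yᵀ))).trace =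
      costQuadratic F Θ S X + costLinear (Fᵀ * F) (B * Bᵀ) Θ X := by
  have hG : (Fᵀ * F).IsSymm := by
    rw [IsSymm, transpose_mul, transpose_transpose]
  have hC : (B * Bᵀ).IsSymm := by
    rw [IsSymm, transpose_mul, transpose_transpose]
  rw [hG.eq, Matrix.mul_add, trace_add, Matrix.mul_assoc Y, trace_mul_mul_add_mul_transpose hG hC,
    Matrix.mul_smul, trace_smul, trace_transpose_mul_self_mul_mul_transpose, costQuadratic_apply,
    costLinear_apply, hY]
  simp only [Matrix.mul_smul, Matrix.smul_mul, trace_smul, QuadraticMap.map_smul, smul_eq_mul,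
    Matrix.mul_assoc]
  ring

end Frobenius

theorem convex_setOf_transpose_eq_self {R α n : Type*} [Semiring R] [PartialOrder R]
    [AddCommMonoid α] [Module R α] : Convex R {X : Matrix n n α | Xᵀ = X} := by
  intro X (hX : Xᵀ = X) Y (hY : Yᵀ = Y) a b _ _ _
  change (a • X + b • Y)ᵀ = a • X + b • Y
  rw [transpose_add, transpose_smul, transpose_smul, hX, hY]

theorem stmt_15_general {m n p s k : Type*} [Fintype m] [Fintype n] [Fintype p] [Fintype s]
    [Fintype k] (Θ : Matrix n p ℝ) (K : Matrix p n ℝ) (B : Matrix n m ℝ)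
    (P : Matrix n n ℝ) (S : Matrix n k ℝ) (hP : P = S * Sᵀ)
    (F : Matrix s n ℝ) (Sig : Matrix n n ℝ) (hSig : Sig = Fᵀ * F)
    (A : Matrix p n ℝ → Matrix n n ℝ) (hA : ∀ R, A R = (2 : ℝ) • (Θ * (R + K)))
    (f : Matrix p n ℝ → ℝ)
    (hf : ∀ R, f R = (Sigᵀ *
      (A R * B * Bᵀ + B * Bᵀ * (A R)ᵀ + (2 : ℝ) • (A R * P * (A R)ᵀ))).trace) :
    (∀ (R δ : Matrix p n ℝ) (t : ℝ),
      HasDerivAt (deriv fun τ : ℝ => f (R + τ • δ))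
        (16 * ((F * Θ * δ * S)ᵀ * (F * Θ * δ * S)).trace) t ∧
      0 ≤ 16 * ((F * Θ * δ * S)ᵀ * (F * Θ * δ * S)).trace) ∧
    ConvexOn ℝ Set.univ f := by
  subst hP hSig
  set Q := costQuadratic F Θ S
  set l := costLinear (Fᵀ * F) (B * Bᵀ) Θ
  have f_eq (R) : f R = Q (R + K) + l (R + K) := by
    rw [hf, trace_cost_eq_quadratic_add_linear F Θ S B (R + K) (hA R)]
  have two_mul_Q (δ) : 2 * Q δ = 16 * ((F * Θ * δ * S)ᵀ * (F * Θ * δ * S)).trace := by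
    rw [costQuadratic_apply, frobeniusSq_apply]
    ring
  have Q_nonneg : ∀ X, 0 ≤ Q X := costQuadratic_nonneg F Θ S
  refine ⟨fun R δ t => ?_, ?_⟩
  · rw [← two_mul_Q]
    refine ⟨?_, mul_nonneg zero_le_two (Q_nonneg δ)⟩
    simpa only [f_eq, add_right_comm R _ K] using
      hasDerivAt_deriv_quadraticForm_add_linear Q l (R + K) δ t
  · have convex : ConvexOn ℝ Set.univ fun X => Q X + l X :=
      (convexOn_quadraticForm Q_nonneg).add (l.convexOn convex_univ)
    rw [funext f_eq]
    exact convex.translate_left K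

/-- Second directional derivative of `f(R) = ⟨Σ, A(R)BBᵀ + BBᵀA(R)ᵀ + 2A(R)PA(R)ᵀ⟩`
along a symmetric direction `δ`: it equals `16‖FΘδ√P‖² ≥ 0`; in particular `f` is
convex on the space of real symmetric matrices. -/
theorem stmt_15 (n m s : ℕ)
    (Θ : Matrix (Fin n) (Fin n) ℝ) (hΘ : Θᵀ = -Θ)
    (J : Matrix (Fin m) (Fin m) ℝ) (hJ : Jᵀ = -J)
    (M : Matrix (Fin m) (Fin n) ℝ)
    (B : Matrix (Fin n) (Fin m) ℝ) (hB : B = (2 : ℝ) • (Θ * Mᵀ))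
    (P sqrtP : Matrix (Fin n) (Fin n) ℝ)
    (hP : P.PosSemidef) (hsqrtP : sqrtP.PosSemidef) (hsq : sqrtP * sqrtP = P)
    (F : Matrix (Fin s) (Fin n) ℝ)
    (Sig : Matrix (Fin n) (Fin n) ℝ) (hSig : Sig = Fᵀ * F)
    (A : Matrix (Fin n) (Fin n) ℝ → Matrix (Fin n) (Fin n) ℝ)
    (hA : ∀ R, A R = (2 : ℝ) • (Θ * (R + Mᵀ * J * M)))
    (f : Matrix (Fin n) (Fin n) ℝ → ℝ)
    (hf : ∀ R, f R = (Sigᵀ *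
      (A R * B * Bᵀ + B * Bᵀ * (A R)ᵀ + (2 : ℝ) • (A R * P * (A R)ᵀ))).trace) :
    (∀ R δ : Matrix (Fin n) (Fin n) ℝ, Rᵀ = R → δᵀ = δ →
      HasDerivAt (deriv fun t : ℝ => f (R + t • δ))
        (16 * ((F * Θ * δ * sqrtP)ᵀ * (F * Θ * δ * sqrtP)).trace) 0 ∧
      0 ≤ 16 * ((F * Θ * δ * sqrtP)ᵀ * (F * Θ * δ * sqrtP)).trace) ∧
    ConvexOn ℝ {X : Matrix (Fin n) (Fin n) ℝ | Xᵀ = X} f := by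
  have hS : P = sqrtP * sqrtPᵀ := by
    rw [← conjTranspose_eq_transpose_of_trivial, hsqrtP.isHermitian.eq, hsq]
  obtain ⟨second_deriv, convex⟩ := stmt_15_general Θ (Mᵀ * J * M) B P sqrtP hS F Sig hSig A hA f hf
  exact ⟨fun R δ _ _ => second_deriv R δ 0,
    convex.subset (Set.subset_univ _) convex_setOf_transpose_eq_self⟩
end

section
/- Let Θ ∈ ℝ^{n×n} and J ∈ ℝ^{m×m} be real antisymmetric, M ∈ ℝ^{m×n}, B := 2ΘMᵀ, let P ∈ ℝ^{n×n} be real symmetric positive semidefinite, F ∈ ℝ^{s×n}, Σ := FᵀF, and for symmetric R set A(R) := 2Θ(R + MᵀJM) and f(R) := ⟨Σ, A(R)BBᵀ + BBᵀA(R)ᵀ + 2A(R)PA(R)ᵀ⟩. Let 𝒰 be a linear subspace of the space of real symmetric n×n matrices and R₀ a fixed symmetric matrix. Then R ∈ R₀ + 𝒰 is a global minimizer of f over the affine subspace R₀ + 𝒰 if and only if ⟨S(ΘΣ(BBᵀ + 2A(R)P)), δ⟩ = 0 for all δ ∈ 𝒰, where S(X) := (X + Xᵀ)/2. -/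
open Matrix

/-!
Since `A` is affine in `R`, the cost expands exactly to second order: with `Y = BBᵀ + 2A(R)P`,
`f(R + δ) = f(R) - 4⟨S(ΘΣY), δ⟩ + 8⟨Σ, (Θδ)P(Θδ)ᵀ⟩`, where the linear coefficient comes from
`⟨ΣY, Θδ⟩ = ⟨ΘᵀΣY, δ⟩` and `Θᵀ = -Θ`. The quadratic term is nonnegative because `Σ` and `P` are
positive semidefinite, so `R` is a minimizer exactly when the linear term vanishes on `𝒰`.
-/

section SecondOrderExpansion

variable {𝕜 E : Type*} [Field 𝕜] [LinearOrder 𝕜] [IsStrictOrderedRing 𝕜]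

theorem eq_zero_of_forall_mul_add_sq_mul_nonneg {a b : 𝕜}
    (h : ∀ t : 𝕜, 0 ≤ t * b + t ^ 2 * a) : b = 0 := by
  have hdiscrim : discrim a b 0 ≤ 0 := discrim_le_zero fun t => by linarith [h t]
  simpa [discrim, sq_nonpos_iff] using hdiscrim

theorem isMinOn_iff_of_second_order_expansion [AddCommGroup E] [Module 𝕜 E] {U : Submodule 𝕜 E}
    {f g q : E → 𝕜} {x x₀ : E} (hx : x - x₀ ∈ U)
    (hf : ∀ δ ∈ U, f (x + δ) = f x + g δ + q δ)
    (hg : ∀ (t : 𝕜) (δ : E), g (t • δ) = t * g δ)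
    (hq : ∀ (t : 𝕜) (δ : E), q (t • δ) = t ^ 2 * q δ)
    (hq_nonneg : ∀ δ ∈ U, 0 ≤ q δ) :
    IsMinOn f {y | y - x₀ ∈ U} x ↔ ∀ δ ∈ U, g δ = 0 := by
  rw [isMinOn_iff]
  constructor
  · intro hmin δ hδ
    refine eq_zero_of_forall_mul_add_sq_mul_nonneg (a := q δ) fun t => ?_
    have hmem : x + t • δ - x₀ ∈ U := by
      rw [add_sub_right_comm]
      exact U.add_mem hx (U.smul_mem t hδ)
    have hle := hmin _ hmem
    rw [hf _ (U.smul_mem t hδ), hg, hq] at hle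
    linarith
  · intro hcrit y hy
    have hδ : y - x ∈ U := by simpa using U.sub_mem hy hx
    have hexp := hf _ hδ
    rw [add_sub_cancel, hcrit _ hδ] at hexp
    linarith [hq_nonneg _ hδ]

end SecondOrderExpansion

section FrobeniusInner

variable {l m n R : Type*} [Fintype l] [Fintype m] [Fintype n] [CommSemiring R]

/-- The Frobenius inner product `⟨X, Y⟩ = tr(XᵀY)`. -/
def frobeniusInner (X Y : Matrix m n R) : R := (Xᵀ * Y).trace

theorem frobeniusInner_comm (X Y : Matrix m n R) : frobeniusInner X Y = frobeniusInner Y X := by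
  rw [frobeniusInner, ← trace_transpose, transpose_mul, transpose_transpose, frobeniusInner]

theorem frobeniusInner_add_right (X Y Z : Matrix m n R) :
    frobeniusInner X (Y + Z) = frobeniusInner X Y + frobeniusInner X Z := by
  simp only [frobeniusInner, Matrix.mul_add, trace_add]

theorem frobeniusInner_smul_right (c : R) (X Y : Matrix m n R) :
    frobeniusInner X (c • Y) = c * frobeniusInner X Y := by
  simp only [frobeniusInner, Matrix.mul_smul, trace_smul, smul_eq_mul]

theorem frobeniusInner_mul_right (X : Matrix l n R) (Y : Matrix l m R) (Z : Matrix m n R) :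
    frobeniusInner X (Y * Z) = frobeniusInner (Yᵀ * X) Z := by
  simp only [frobeniusInner, transpose_mul, transpose_transpose, Matrix.mul_assoc]

theorem frobeniusInner_mul_transpose_right (X : Matrix l n R) (W : Matrix l m R)
    (Y : Matrix n m R) : frobeniusInner X (W * Yᵀ) = frobeniusInner (X * Y) W := by
  rw [frobeniusInner, ← Matrix.mul_assoc, trace_mul_comm, ← Matrix.mul_assoc, ← transpose_mul,
    frobeniusInner]

theorem frobeniusInner_transpose_right {X : Matrix n n R} (hX : X.IsSymm) (Y : Matrix n n R) :
    frobeniusInner X Yᵀ = frobeniusInner X Y := by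
  rw [frobeniusInner, ← transpose_mul, trace_transpose, trace_mul_comm, frobeniusInner, hX.eq]

theorem frobeniusInner_mul_transpose_add {X : Matrix m m R} (hX : X.IsSymm) (Y W : Matrix m n R) :
    frobeniusInner X (Y * Wᵀ + W * Yᵀ) = 2 * frobeniusInner (X * Y) W := by
  have hswap : Y * Wᵀ = (W * Yᵀ)ᵀ := by rw [transpose_mul, transpose_transpose]
  rw [frobeniusInner_add_right, hswap, frobeniusInner_transpose_right hX,
    frobeniusInner_mul_transpose_right, two_mul]

end FrobeniusInner

section Symmetrizer

variable {n 𝕜 : Type*} [Field 𝕜]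

/-- The symmetrizer `S(X) = (X + Xᵀ)/2`. -/
def symmetrizer (X : Matrix n n 𝕜) : Matrix n n 𝕜 := (1 / 2 : 𝕜) • (X + Xᵀ)

theorem frobeniusInner_symmetrizer_left [Fintype n] [NeZero (2 : 𝕜)] (X : Matrix n n 𝕜)
    {Y : Matrix n n 𝕜} (hY : Y.IsSymm) :
    frobeniusInner (symmetrizer X) Y = frobeniusInner X Y := by
  rw [frobeniusInner_comm, symmetrizer, frobeniusInner_smul_right, frobeniusInner_add_right,
    frobeniusInner_transpose_right hY, frobeniusInner_comm X]
  field_simp [NeZero.ne (2 : 𝕜)]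
  ring

end Symmetrizer

open scoped ComplexOrder MatrixOrder in
theorem trace_mul_nonneg_of_posSemidef {n 𝕜 : Type*} [Fintype n] [RCLike 𝕜]
    {X Y : Matrix n n 𝕜} (hX : X.PosSemidef) (hY : Y.PosSemidef) : 0 ≤ (X * Y).trace := by
  classical
  obtain ⟨Z, rfl⟩ := CStarAlgebra.nonneg_iff_eq_star_mul_self.mp hX.nonneg
  rw [Matrix.mul_assoc, trace_mul_comm]
  exact (hY.mul_mul_conjTranspose_same Z).trace_nonneg

theorem frobeniusInner_mul_mul_transpose_nonneg {m n : Type*} [Fintype m] [Fintype n]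
    {X : Matrix m m ℝ} {P : Matrix n n ℝ} (hX : X.PosSemidef) (hP : P.PosSemidef)
    (W : Matrix m n ℝ) : 0 ≤ frobeniusInner X (W * P * Wᵀ) :=
  trace_mul_nonneg_of_posSemidef hX.transpose (hP.mul_mul_conjTranspose_same W)

section QuadraticCost

variable {m n R : Type*} [Fintype m] [Fintype n] [CommSemiring R]

/-- The quadratic cost `⟨Σ, A Dᵀ + D Aᵀ + 2 A P Aᵀ⟩` of a drift matrix `A`. The paper's
cost is the case `D = BBᵀ`, where `Dᵀ = D`. -/
def driftCost (Sig : Matrix m m R) (D : Matrix m n R) (P : Matrix n n R) (A : Matrix m n R) : R :=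
  frobeniusInner Sig (A * Dᵀ + D * Aᵀ + (2 : R) • (A * P * Aᵀ))

theorem driftCost_add {Sig : Matrix m m R} (hSig : Sig.IsSymm) {P : Matrix n n R} (hP : P.IsSymm)
    (D A W : Matrix m n R) :
    driftCost Sig D P (A + W) = driftCost Sig D P A
      + 2 * frobeniusInner (Sig * (D + (2 : R) • (A * P))) W
      + 2 * frobeniusInner Sig (W * P * Wᵀ) := by
  have hexpand : (A + W) * Dᵀ + D * (A + W)ᵀ + (2 : R) • ((A + W) * P * (A + W)ᵀ)
      = A * Dᵀ + D * Aᵀ + (2 : R) • (A * P * Aᵀ)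
        + ((D + (2 : R) • (A * P)) * Wᵀ + W * (D + (2 : R) • (A * P))ᵀ)
        + (2 : R) • (W * P * Wᵀ) := by
    simp only [transpose_add, transpose_smul, transpose_mul, hP.eq, Matrix.add_mul, Matrix.mul_add,
      Matrix.smul_mul, Matrix.mul_smul, smul_add, Matrix.mul_assoc]
    abel
  rw [driftCost, hexpand, frobeniusInner_add_right, frobeniusInner_add_right,
    frobeniusInner_mul_transpose_add hSig, frobeniusInner_smul_right, driftCost]

end QuadraticCost

theorem driftCost_affine_add {n 𝕜 : Type*} [Fintype n] [Field 𝕜] [NeZero (2 : 𝕜)]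
    {Θ K D P Sig : Matrix n n 𝕜} (hΘ : Θᵀ = -Θ) (hSig : Sig.IsSymm) (hP : P.IsSymm)
    {A : Matrix n n 𝕜 → Matrix n n 𝕜} (hA : ∀ R, A R = (2 : 𝕜) • (Θ * (R + K)))
    (R : Matrix n n 𝕜) {δ : Matrix n n 𝕜} (hδ : δ.IsSymm) :
    driftCost Sig D P (A (R + δ)) = driftCost Sig D P (A R)
      + -4 * frobeniusInner (symmetrizer (Θ * Sig * (D + (2 : 𝕜) • (A R * P)))) δ
      + 8 * frobeniusInner Sig (Θ * δ * P * (Θ * δ)ᵀ) := by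
  have hA_add : A (R + δ) = A R + (2 : 𝕜) • (Θ * δ) := by
    rw [hA, hA, ← smul_add, ← Matrix.mul_add, add_right_comm]
  have hadjoint (Y : Matrix n n 𝕜) :
      frobeniusInner (Sig * Y) (Θ * δ) = -frobeniusInner (symmetrizer (Θ * Sig * Y)) δ := by
    rw [frobeniusInner_symmetrizer_left _ hδ, frobeniusInner_mul_right, hΘ, Matrix.mul_assoc Θ]
    simp only [frobeniusInner, Matrix.neg_mul, transpose_neg, trace_neg]
  rw [hA_add, driftCost_add hSig hP, frobeniusInner_smul_right, hadjoint]
  simp only [transpose_smul, Matrix.smul_mul, Matrix.mul_smul, frobeniusInner_smul_right]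
  ring

theorem stmt_16_general {n : Type*} [Fintype n] {Θ K D P Sig : Matrix n n ℝ} (hΘ : Θᵀ = -Θ)
    (hP : P.PosSemidef) (hSig : Sig.PosSemidef)
    {A : Matrix n n ℝ → Matrix n n ℝ} (hA : ∀ R, A R = (2 : ℝ) • (Θ * (R + K)))
    {U : Submodule ℝ (Matrix n n ℝ)} (hU : ∀ X ∈ U, X.IsSymm)
    {R₀ R : Matrix n n ℝ} (hR : R - R₀ ∈ U) :
    IsMinOn (fun X => driftCost Sig D P (A X)) {X | X - R₀ ∈ U} R ↔
      ∀ δ ∈ U, frobeniusInner (symmetrizer (Θ * Sig * (D + (2 : ℝ) • (A R * P)))) δ = 0 := by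
  have hSig_symm : Sig.IsSymm := isHermitian_iff_isSymm.mp hSig.isHermitian
  have hP_symm : P.IsSymm := isHermitian_iff_isSymm.mp hP.isHermitian
  let G := symmetrizer (Θ * Sig * (D + (2 : ℝ) • (A R * P)))
  have hmin := isMinOn_iff_of_second_order_expansion hR
    (f := fun X => driftCost Sig D P (A X))
    (g := fun δ => -4 * frobeniusInner G δ)
    (q := fun δ => 8 * frobeniusInner Sig (Θ * δ * P * (Θ * δ)ᵀ))
    (fun δ hδ => driftCost_affine_add hΘ hSig_symm hP_symm hA R (hU δ hδ))
    (fun t δ => by rw [frobeniusInner_smul_right, mul_left_comm])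
    (fun t δ => by
      simp only [transpose_smul, Matrix.smul_mul, Matrix.mul_smul, frobeniusInner_smul_right]
      ring)
    (fun δ _ => mul_nonneg (by norm_num) (frobeniusInner_mul_mul_transpose_nonneg hSig hP (Θ * δ)))
  simpa only [mul_eq_zero, neg_eq_zero, OfNat.ofNat_ne_zero, false_or] using hmin

/-- First-order optimality condition: `R ∈ R₀ + 𝒰` is a global minimizer of
`f(R) = ⟨Σ, A(R)BBᵀ + BBᵀA(R)ᵀ + 2A(R)PA(R)ᵀ⟩` over the affine subspace `R₀ + 𝒰`
iff `⟨S(ΘΣ(BBᵀ + 2A(R)P)), δ⟩ = 0` for all `δ ∈ 𝒰`. -/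
theorem stmt_16 (n m s : ℕ)
    (Θ : Matrix (Fin n) (Fin n) ℝ) (hΘ : Θᵀ = -Θ)
    (J : Matrix (Fin m) (Fin m) ℝ) (hJ : Jᵀ = -J)
    (M : Matrix (Fin m) (Fin n) ℝ)
    (B : Matrix (Fin n) (Fin m) ℝ) (hB : B = (2 : ℝ) • (Θ * Mᵀ))
    (P : Matrix (Fin n) (Fin n) ℝ) (hP : P.PosSemidef)
    (F : Matrix (Fin s) (Fin n) ℝ)
    (Sig : Matrix (Fin n) (Fin n) ℝ) (hSig : Sig = Fᵀ * F)
    (A : Matrix (Fin n) (Fin n) ℝ → Matrix (Fin n) (Fin n) ℝ)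
    (hA : ∀ R, A R = (2 : ℝ) • (Θ * (R + Mᵀ * J * M)))
    (f : Matrix (Fin n) (Fin n) ℝ → ℝ)
    (hf : ∀ R, f R = (Sigᵀ *
      (A R * B * Bᵀ + B * Bᵀ * (A R)ᵀ + (2 : ℝ) • (A R * P * (A R)ᵀ))).trace)
    (Sgrad : Matrix (Fin n) (Fin n) ℝ → Matrix (Fin n) (Fin n) ℝ)
    (hSgrad : ∀ R, Sgrad R = (1 / 2 : ℝ) •
      (Θ * Sig * (B * Bᵀ + (2 : ℝ) • (A R * P)) +
        (Θ * Sig * (B * Bᵀ + (2 : ℝ) • (A R * P)))ᵀ))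
    (U : Submodule ℝ (Matrix (Fin n) (Fin n) ℝ)) (hU : ∀ X ∈ U, Xᵀ = X)
    (R₀ : Matrix (Fin n) (Fin n) ℝ) (hR₀ : R₀ᵀ = R₀) :
    ∀ R : Matrix (Fin n) (Fin n) ℝ, R - R₀ ∈ U →
      ((∀ R' : Matrix (Fin n) (Fin n) ℝ, R' - R₀ ∈ U → f R ≤ f R') ↔
        ∀ δ ∈ U, ((Sgrad R)ᵀ * δ).trace = 0) := by
  intro R hR
  have hSig_psd : Sig.PosSemidef := hSig ▸ posSemidef_conjTranspose_mul_self F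
  have hf_cost : f = fun X => driftCost Sig (B * Bᵀ) P (A X) := by
    funext X
    rw [hf, driftCost, frobeniusInner, transpose_mul, transpose_transpose, Matrix.mul_assoc (A X)]
  rw [hSgrad, hf_cost]
  exact isMinOn_iff.symm.trans (stmt_16_general hΘ hP hSig_psd hA hU hR)
end

section
/- Let n₁, n₂ be positive integers, let Θ₁ ∈ ℝ^{n₁×n₁} and Θ₂ ∈ ℝ^{n₂×n₂} be real antisymmetric, and let Σ, P ∈ ℝ^{(n₁+n₂)×(n₁+n₂)} be real symmetric positive semidefinite, written in block form Σ = [[Σ₁₁, Σ₁₂],[Σ₁₂ᵀ, Σ₂₂]] and P = [[P₁₁, P₁₂],[P₁₂ᵀ, P₂₂]] with Σ₁₁, P₁₁ ∈ ℝ^{n₁×n₁}. Define the linear operator g on ℝ^{n₁×n₂} by g(N) := Θ₁Σ₁₁Θ₁ N P₂₂ + P₁₁ N Θ₂Σ₂₂Θ₂ + Θ₁Σ₁₂Θ₂ Nᵀ P₁₂ + P₁₂ Nᵀ Θ₁Σ₁₂Θ₂. Then g is self-adjoint with respect to the Frobenius inner product, i.e., ⟨g(N), N'⟩ = ⟨N,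 g(N')⟩ for all N, N' ∈ ℝ^{n₁×n₂}, and g is negative semidefinite, i.e., ⟨N, g(N)⟩ ≤ 0 for all N ∈ ℝ^{n₁×n₂}. -/
open Matrix

/-!
Let `⟨X, Y⟩ = Re tr (Xᴴ Y)`, `L N = [[0, N], [Nᴴ, 0]]`, `Θ = diag(Θ₁, Θ₂)` and `M = Θ Σ Θ`. Then
`g N` is the upper right block of `M (L N) P + P (L N) M`. Pairing `L N` with a Hermitian block
matrix reads off twice the pairing of `N` with its upper right block, so
`2 ⟨N, g N'⟩ = tr (L N (M (L N') P + P (L N') M))`. This is symmetric in `N` and `N'` by cyclicity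
of the trace. For `N = N'` it equals `2 tr ((L N) M (L N) P)`, which is nonpositive because
`-M = Θᴴ Σ Θ`, hence also `-(L N) M (L N)`, is positive semidefinite, and the trace of a product
of two positive semidefinite matrices is nonnegative.
-/

section SymmSandwich

/-- The symmetrised two-sided multiplication operator `X ↦ M X P + P X M` on square matrices. -/
def symmSandwich {ι R : Type*} [Fintype ι] [NonUnitalNonAssocSemiring R] (M P X : Matrix ι ι R) :
    Matrix ι ι R :=
  M * X * P + P * X * M

lemma isHermitian_symmSandwich {ι R : Type*} [Fintype ι] [NonUnitalSemiring R] [StarRing R]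
    {M P X : Matrix ι ι R} (hM : M.IsHermitian) (hP : P.IsHermitian) (hX : X.IsHermitian) :
    (symmSandwich M P X).IsHermitian := by
  simp only [IsHermitian, symmSandwich, conjTranspose_add, conjTranspose_mul, hM.eq, hP.eq, hX.eq,
    Matrix.mul_assoc, add_comm]

lemma trace_mul_symmSandwich {ι R : Type*} [Fintype ι] [NonUnitalCommSemiring R]
    (M P X Y : Matrix ι ι R) :
    (X * symmSandwich M P Y).trace = (X * M * Y * P).trace + (Y * M * X * P).trace := by
  have hcycle : (X * (P * Y * M)).trace = (Y * M * X * P).trace := by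
    rw [← Matrix.mul_assoc, ← Matrix.mul_assoc, Matrix.mul_assoc, trace_mul_comm,
      ← Matrix.mul_assoc]
  rw [symmSandwich, Matrix.mul_add, trace_add, hcycle]
  simp only [Matrix.mul_assoc]

lemma trace_mul_symmSandwich_comm {ι R : Type*} [Fintype ι] [NonUnitalCommSemiring R]
    (M P X Y : Matrix ι ι R) :
    (X * symmSandwich M P Y).trace = (Y * symmSandwich M P X).trace := by
  rw [trace_mul_symmSandwich, trace_mul_symmSandwich, add_comm]

open scoped ComplexOrder

variable {ι 𝕜 : Type*} [Fintype ι] [RCLike 𝕜]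

lemma trace_mul_nonneg_of_posSemidef_s17 {A B : Matrix ι ι 𝕜} (hA : A.PosSemidef)
    (hB : B.PosSemidef) : 0 ≤ (A * B).trace := by
  classical
  obtain ⟨C, rfl⟩ : ∃ C : Matrix ι ι 𝕜, B = Cᴴ * C := by
    open scoped MatrixOrder in
    exact CStarAlgebra.nonneg_iff_eq_star_mul_self.mp hB.nonneg
  rw [← Matrix.mul_assoc, trace_mul_cycle]
  exact (hA.mul_mul_conjTranspose_same C).trace_nonneg

lemma trace_mul_symmSandwich_self_nonpos {M P X : Matrix ι ι 𝕜} (hM : (-M).PosSemidef)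
    (hP : P.PosSemidef) (hX : X.IsHermitian) : (X * symmSandwich M P X).trace ≤ 0 := by
  have hXMX : (-(X * M * X)).PosSemidef := by
    simpa only [hX.eq, Matrix.mul_neg, Matrix.neg_mul] using hM.conjTranspose_mul_mul_same X
  have htrace : (X * M * X * P).trace ≤ 0 := by
    simpa only [Matrix.neg_mul, trace_neg, Left.nonneg_neg_iff] using
      trace_mul_nonneg_of_posSemidef_s17 hXMX hP
  rw [trace_mul_symmSandwich]
  exact add_nonpos htrace htrace

end SymmSandwich

section HermitianDilation

variable {m n R : Type*}

/-- The Hermitian dilation `[[0, N], [Nᴴ, 0]]` of a rectangular matrix `N`. -/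
def hermitianDilation [Zero R] [Star R] (N : Matrix m n R) :
    Matrix (m ⊕ n) (m ⊕ n) R :=
  fromBlocks 0 N Nᴴ 0

lemma isHermitian_hermitianDilation [AddMonoid R] [StarAddMonoid R] (N : Matrix m n R) :
    (hermitianDilation N).IsHermitian :=
  isHermitian_zero.fromBlocks rfl isHermitian_zero

variable [Fintype m] [Fintype n]

lemma trace_fromBlocks [AddCommMonoid R] (A : Matrix m m R) (B : Matrix m n R)
    (C : Matrix n m R) (D : Matrix n n R) : (fromBlocks A B C D).trace = A.trace + D.trace := by
  simp [trace, Fintype.sum_sum_type]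

lemma re_trace_conjTranspose_mul_comm {𝕜 : Type*} [RCLike 𝕜] (A B : Matrix m n 𝕜) :
    RCLike.re (Aᴴ * B).trace = RCLike.re (Bᴴ * A).trace := by
  rw [← conjTranspose_conjTranspose B, ← conjTranspose_mul, trace_conjTranspose,
    conjTranspose_conjTranspose, RCLike.star_def, RCLike.conj_re]

lemma re_trace_hermitianDilation_mul {𝕜 : Type*} [RCLike 𝕜] (N : Matrix m n 𝕜)
    {X : Matrix (m ⊕ n) (m ⊕ n) 𝕜} (hX : X.IsHermitian) :
    RCLike.re (hermitianDilation N * X).trace = 2 * RCLike.re (Nᴴ * X.toBlocks₁₂).trace := by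
  have hX₂₁ : X.toBlocks₂₁ = X.toBlocks₁₂ᴴ := by
    rw [← fromBlocks_toBlocks X, isHermitian_fromBlocks_iff] at hX
    exact hX.2.1.symm
  have hblocks : (hermitianDilation N * X).trace =
      (N * X.toBlocks₁₂ᴴ).trace + (Nᴴ * X.toBlocks₁₂).trace := by
    conv_lhs => rw [hermitianDilation, ← fromBlocks_toBlocks X, hX₂₁]
    simp only [fromBlocks_multiply, trace_fromBlocks, Matrix.zero_mul, zero_add, add_zero]
  rw [hblocks, trace_mul_comm, map_add, re_trace_conjTranspose_mul_comm, two_mul]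

/-- The compression of `symmSandwich M P` to off-diagonal blocks: the operator on rectangular
matrices which embeds `N` as its Hermitian dilation, applies `symmSandwich M P`, and returns the
upper right block. -/
def offDiagSandwich [NonUnitalNonAssocSemiring R] [Star R] (M P : Matrix (m ⊕ n) (m ⊕ n) R)
    (N : Matrix m n R) : Matrix m n R :=
  (symmSandwich M P (hermitianDilation N)).toBlocks₁₂

lemma offDiagSandwich_fromBlocks [NonUnitalSemiring R] [Star R] (A P₁₁ : Matrix m m R)
    (B P₂₂ : Matrix n n R) (C P₁₂ : Matrix m n R) (D P₂₁ : Matrix n m R) (N : Matrix m n R) :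
    offDiagSandwich (fromBlocks A C D B) (fromBlocks P₁₁ P₁₂ P₂₁ P₂₂) N =
      A * N * P₂₂ + P₁₁ * N * B + C * Nᴴ * P₁₂ + P₁₂ * Nᴴ * C := by
  simp only [offDiagSandwich, symmSandwich, hermitianDilation, fromBlocks_multiply,
    fromBlocks_add, toBlocks_fromBlocks₁₂, Matrix.mul_zero, zero_add, add_zero]
  abel

variable {𝕜 : Type*} [RCLike 𝕜] {M P : Matrix (m ⊕ n) (m ⊕ n) 𝕜}

lemma two_mul_re_trace_conjTranspose_mul_offDiagSandwich (hM : M.IsHermitian)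
    (hP : P.IsHermitian) (N N' : Matrix m n 𝕜) :
    2 * RCLike.re (Nᴴ * offDiagSandwich M P N').trace =
      RCLike.re (hermitianDilation N * symmSandwich M P (hermitianDilation N')).trace :=
  (re_trace_hermitianDilation_mul N
    (isHermitian_symmSandwich hM hP (isHermitian_hermitianDilation N'))).symm

lemma re_trace_conjTranspose_offDiagSandwich_mul (hM : M.IsHermitian) (hP : P.IsHermitian)
    (N N' : Matrix m n 𝕜) :
    RCLike.re ((offDiagSandwich M P N)ᴴ * N').trace =
      RCLike.re (Nᴴ * offDiagSandwich M P N').trace := by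
  rw [re_trace_conjTranspose_mul_comm]
  refine mul_left_cancel₀ (two_ne_zero (α := ℝ)) ?_
  rw [two_mul_re_trace_conjTranspose_mul_offDiagSandwich hM hP, trace_mul_symmSandwich_comm,
    two_mul_re_trace_conjTranspose_mul_offDiagSandwich hM hP]

open scoped ComplexOrder

lemma re_trace_conjTranspose_mul_offDiagSandwich_nonpos (hM : (-M).PosSemidef)
    (hP : P.PosSemidef) (N : Matrix m n 𝕜) :
    RCLike.re (Nᴴ * offDiagSandwich M P N).trace ≤ 0 := by
  have hM' : M.IsHermitian := by simpa only [neg_neg] using hM.isHermitian.neg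
  have hdilation := two_mul_re_trace_conjTranspose_mul_offDiagSandwich hM' hP.isHermitian N N
  have hnonpos := (RCLike.nonpos_iff.mp
    (trace_mul_symmSandwich_self_nonpos hM hP (isHermitian_hermitianDilation N))).1
  linarith

end HermitianDilation

section SkewHermitian

open scoped ComplexOrder

lemma posSemidef_neg_mul_mul_of_conjTranspose_eq_neg {ι R : Type*} [Fintype ι] [Ring R]
    [PartialOrder R] [StarRing R] {S Θ : Matrix ι ι R} (hS : S.PosSemidef) (hΘ : Θᴴ = -Θ) :
    (-(Θ * S * Θ)).PosSemidef := by
  simpa only [hΘ, Matrix.neg_mul] using hS.conjTranspose_mul_mul_same Θ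

theorem stmt_17_general {m n 𝕜 : Type*} [Fintype m] [Fintype n] [RCLike 𝕜]
    {Θ₁ : Matrix m m 𝕜} (hΘ₁ : Θ₁ᴴ = -Θ₁) {Θ₂ : Matrix n n 𝕜} (hΘ₂ : Θ₂ᴴ = -Θ₂)
    {S₁₁ P₁₁ : Matrix m m 𝕜} {S₂₂ P₂₂ : Matrix n n 𝕜} {S₁₂ P₁₂ : Matrix m n 𝕜}
    (hS : (fromBlocks S₁₁ S₁₂ S₁₂ᴴ S₂₂).PosSemidef)
    (hP : (fromBlocks P₁₁ P₁₂ P₁₂ᴴ P₂₂).PosSemidef)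
    {g : Matrix m n 𝕜 → Matrix m n 𝕜}
    (hg : ∀ N, g N = Θ₁ * S₁₁ * Θ₁ * N * P₂₂ + P₁₁ * N * (Θ₂ * S₂₂ * Θ₂) +
      Θ₁ * S₁₂ * Θ₂ * Nᴴ * P₁₂ + P₁₂ * Nᴴ * (Θ₁ * S₁₂ * Θ₂)) :
    (∀ N N', RCLike.re ((g N)ᴴ * N').trace = RCLike.re (Nᴴ * g N').trace) ∧
      ∀ N, RCLike.re (Nᴴ * g N).trace ≤ 0 := by
  set S := fromBlocks S₁₁ S₁₂ S₁₂ᴴ S₂₂ with hSblocks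
  set P := fromBlocks P₁₁ P₁₂ P₁₂ᴴ P₂₂ with hPblocks
  let Θ := fromBlocks Θ₁ 0 0 Θ₂
  have hΘ : Θᴴ = -Θ := by
    simp only [Θ, fromBlocks_conjTranspose, fromBlocks_neg, hΘ₁, hΘ₂, conjTranspose_zero, neg_zero]
  have hM : (-(Θ * S * Θ)).PosSemidef := posSemidef_neg_mul_mul_of_conjTranspose_eq_neg hS hΘ
  have hM' : (Θ * S * Θ).IsHermitian := by simpa only [neg_neg] using hM.isHermitian.neg
  obtain rfl : g = offDiagSandwich (Θ * S * Θ) P := by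
    funext N
    simp only [hg, Θ, hSblocks, hPblocks, fromBlocks_multiply, Matrix.zero_mul, Matrix.mul_zero,
      zero_add, add_zero, offDiagSandwich_fromBlocks]
  exact ⟨re_trace_conjTranspose_offDiagSandwich_mul hM' hP.isHermitian,
    re_trace_conjTranspose_mul_offDiagSandwich_nonpos hM hP⟩

end SkewHermitian

/-- The linear operator `g` built from the blocks of the psd matrices `Σ`, `P` and the
antisymmetric matrices `Θ₁`, `Θ₂` is self-adjoint and negative semidefinite with respect
to the Frobenius inner product. -/
theorem stmt_17 (n₁ n₂ : ℕ) (hn₁ : 0 < n₁) (hn₂ : 0 < n₂)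
    (Θ₁ : Matrix (Fin n₁) (Fin n₁) ℝ) (hΘ₁ : Θ₁ᵀ = -Θ₁)
    (Θ₂ : Matrix (Fin n₂) (Fin n₂) ℝ) (hΘ₂ : Θ₂ᵀ = -Θ₂)
    (S11 P11 : Matrix (Fin n₁) (Fin n₁) ℝ)
    (S22 P22 : Matrix (Fin n₂) (Fin n₂) ℝ)
    (S12 P12 : Matrix (Fin n₁) (Fin n₂) ℝ)
    (hS : (Matrix.fromBlocks S11 S12 S12ᵀ S22).PosSemidef)
    (hP : (Matrix.fromBlocks P11 P12 P12ᵀ P22).PosSemidef)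
    (g : Matrix (Fin n₁) (Fin n₂) ℝ → Matrix (Fin n₁) (Fin n₂) ℝ)
    (hg : ∀ N, g N = Θ₁ * S11 * Θ₁ * N * P22 + P11 * N * (Θ₂ * S22 * Θ₂) +
      Θ₁ * S12 * Θ₂ * Nᵀ * P12 + P12 * Nᵀ * (Θ₁ * S12 * Θ₂)) :
    (∀ N N' : Matrix (Fin n₁) (Fin n₂) ℝ,
        ((g N)ᵀ * N').trace = (Nᵀ * g N').trace) ∧
      (∀ N : Matrix (Fin n₁) (Fin n₂) ℝ, (Nᵀ * g N).trace ≤ 0) := by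
  simp only [← conjTranspose_eq_transpose_of_trivial] at *
  exact stmt_17_general hΘ₁ hΘ₂ hS hP hg
end
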